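/- Let Y*, Y ∈ ℝ^{p×r}_* and X* := Y*Y*ᵀ. Then: (ii) ‖2(YYᵀ − X*)Y‖_F ≥ 2(‖Y‖³ − ‖Y‖·‖Y*‖²); in particular, if ‖Y‖ > β‖Y*‖ for some β > 1, then ‖2(YYᵀ − X*)Y‖_F > 2(β³ − β)‖Y*‖³. (iii) ⟨2(YYᵀ − X*)Y, Y⟩ ≥ 2‖YYᵀ‖²_F − 2‖YYᵀ‖_F·‖X*‖_F; in particular, if ‖YYᵀ‖_F > γ‖X*‖_F for some γ > 1, then ⟨2(YYᵀ − X*)Y, Y⟩ > 2(1 − 1/γ)·‖YYᵀ‖²_F. -/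

import Mathlib

open Matrix

/-- Trace inner product `⟨A,B⟩ = tr(AᵀB)`. -/
noncomputable def trInner {m n : ℕ} (A B : Matrix (Fin m) (Fin n) ℝ) : ℝ :=
  ∑ i, ∑ j, A i j * B i j

/-- Frobenius norm. -/
noncomputable def frob {m n : ℕ} (A : Matrix (Fin m) (Fin n) ℝ) : ℝ :=
  Real.sqrt (∑ i, ∑ j, (A i j) ^ 2)

open scoped Classical in
/-- The `i`-th largest eigenvalue (1-indexed, `1 ≤ i ≤ n`) of a Hermitian matrix; junk value 0
otherwise. -/
noncomputable def eigVal {n : ℕ} (A : Matrix (Fin n) (Fin n) ℝ) (i : ℕ) : ℝ :=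
  if hA : A.IsHermitian then
    if h : n - i < n then hA.eigenvalues (Tuple.sort hA.eigenvalues ⟨n - i, h⟩) else 0
  else 0

/-- The `i`-th largest singular value (1-indexed) of `Y`, so `sval Y 1 = ‖Y‖` (spectral norm)
and `sval Y r` is the least singular value. -/
noncomputable def sval {p r : ℕ} (Y : Matrix (Fin p) (Fin r) ℝ) (i : ℕ) : ℝ :=
  Real.sqrt (eigVal (Yᵀ * Y) i)

/-- `Q` is an orthogonal matrix. -/
def IsOrtho {r : ℕ} (Q : Matrix (Fin r) (Fin r) ℝ) : Prop := Qᵀ * Q = 1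

/-- The quotient distance `d(Y₁,Y₂) = min_{Q ∈ O(r)} ‖Y₂Q − Y₁‖_F`. -/
noncomputable def dOrth {p r : ℕ} (Y₁ Y₂ : Matrix (Fin p) (Fin r) ℝ) : ℝ :=
  sInf {c | ∃ Q : Matrix (Fin r) (Fin r) ℝ, IsOrtho Q ∧ c = frob (Y₂ * Q - Y₁)}


lemma frob_nonneg {m n : ℕ} (A : Matrix (Fin m) (Fin n) ℝ) : 0 ≤ frob A := Real.sqrt_nonneg _

lemma frob_sq {m n : ℕ} (A : Matrix (Fin m) (Fin n) ℝ) : frob A ^ 2 = trInner A A := by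
  unfold frob trInner
  rw [Real.sq_sqrt (by positivity)]
  simp only [sq]

lemma trInner_le {m n : ℕ} (A B : Matrix (Fin m) (Fin n) ℝ) :
    trInner A B ≤ frob A * frob B := by
  unfold frob trInner
  simp only [← Fintype.sum_prod_type']
  exact Real.sum_mul_le_sqrt_mul_sqrt _ _ _

lemma trInner_mul {p r : ℕ} (A : Matrix (Fin p) (Fin p) ℝ) (Y : Matrix (Fin p) (Fin r) ℝ) :
    trInner (A * Y) Y = trInner A (Y * Yᵀ) := by
  unfold trInner
  simp only [Matrix.mul_apply, Matrix.transpose_apply, Finset.sum_mul, Finset.mul_sum]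
  refine Finset.sum_congr rfl fun i _ => ?_
  rw [Finset.sum_comm]
  refine Finset.sum_congr rfl fun j _ => Finset.sum_congr rfl fun k _ => ?_
  ring

lemma frob_two {m n : ℕ} (A : Matrix (Fin m) (Fin n) ℝ) : frob ((2 : ℝ) • A) = 2 * frob A := by
  unfold frob
  simp only [Matrix.smul_apply, smul_eq_mul, mul_pow, ← Finset.mul_sum]
  rw [Real.sqrt_mul (by positivity), Real.sqrt_sq (by norm_num)]

section
open scoped Matrix.Norms.L2Operator

lemma opNorm_le_frob {m n : ℕ} (A : Matrix (Fin m) (Fin n) ℝ) : ‖A‖ ≤ frob A := by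
  rw [Matrix.l2_opNorm_def]
  refine ContinuousLinearMap.opNorm_le_bound _ (frob_nonneg A) fun x => ?_
  rw [EuclideanSpace.norm_eq, EuclideanSpace.norm_eq, frob, ← Real.sqrt_mul (by positivity)]
  refine Real.sqrt_le_sqrt ?_
  rw [Finset.sum_mul]
  refine Finset.sum_le_sum fun i _ => ?_
  simp only [Real.norm_eq_abs, sq_abs]
  have h := Finset.sum_mul_sq_le_sq_mul_sq Finset.univ (fun j => A i j) (fun j => x j)
  exact h

lemma opNorm_herm {n : ℕ} (A : Matrix (Fin n) (Fin n) ℝ) (hA : A.IsHermitian) :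
    ‖A‖ = ‖hA.eigenvalues‖ := by
  conv_lhs => rw [hA.spectral_theorem]
  rw [Unitary.conjStarAlgAut_apply]
  rw [CStarRing.norm_mul_mem_unitary _ (by simp)]
  rw [CStarRing.norm_coe_unitary_mul]
  rw [Matrix.l2_opNorm_diagonal]
  rfl

lemma sval_one {p r : ℕ} (Y : Matrix (Fin p) (Fin r) ℝ) : sval Y 1 = ‖Y‖ := by
  have hps : (Yᵀ * Y).PosSemidef := by
    have := Matrix.posSemidef_conjTranspose_mul_self Y
    rwa [Matrix.conjTranspose_eq_transpose_of_trivial] at this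
  have hA := hps.isHermitian
  have h1 : ‖Yᵀ * Y‖ = ‖Y‖ * ‖Y‖ := by
    have := Matrix.l2_opNorm_conjTranspose_mul_self Y
    rwa [Matrix.conjTranspose_eq_transpose_of_trivial] at this
  have h2 : eigVal (Yᵀ * Y) 1 = ‖Yᵀ * Y‖ := by
    rw [opNorm_herm _ hA]
    unfold eigVal
    rw [dif_pos hA]
    split_ifs with h
    · apply le_antisymm
      · exact (le_abs_self _).trans (norm_le_pi_norm hA.eigenvalues _)
      · rw [pi_norm_le_iff_of_nonneg (hps.eigenvalues_nonneg _)]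
        intro i
        rw [Real.norm_of_nonneg (hps.eigenvalues_nonneg _)]
        have hm := Tuple.monotone_sort hA.eigenvalues
        have := @hm ((Tuple.sort hA.eigenvalues).symm i) ⟨r - 1, h⟩ (by
          rw [Fin.le_def]; simp only; omega)
        simpa using this
    · have : r = 0 := by omega
      subst this
      symm
      rw [norm_eq_zero]
      exact Subsingleton.elim _ _
  rw [sval, h2, h1, Real.sqrt_mul_self (norm_nonneg _)]

lemma main_ii {p r : ℕ} (Ystar Y : Matrix (Fin p) (Fin r) ℝ) :
    sval Y 1 ^ 3 - sval Y 1 * sval Ystar 1 ^ 2 ≤ frob ((Y * Yᵀ - Ystar * Ystarᵀ) * Y) := by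
  refine le_trans ?_ (opNorm_le_frob _)
  rw [sval_one, sval_one]
  have ht : ∀ Z : Matrix (Fin p) (Fin r) ℝ, ‖Zᵀ‖ = ‖Z‖ := fun Z => by
    rw [← Matrix.conjTranspose_eq_transpose_of_trivial, Matrix.l2_opNorm_conjTranspose]
  have h1 : ‖Yᵀ * Y‖ = ‖Y‖ * ‖Y‖ := by
    have := Matrix.l2_opNorm_conjTranspose_mul_self Y
    rwa [Matrix.conjTranspose_eq_transpose_of_trivial] at this
  have h2 : ‖Yᵀ * Y * (Yᵀ * Y)‖ = ‖Yᵀ * Y‖ * ‖Yᵀ * Y‖ := by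
    have := Matrix.l2_opNorm_conjTranspose_mul_self (Yᵀ * Y)
    rwa [Matrix.conjTranspose_eq_transpose_of_trivial, Matrix.transpose_mul,
      Matrix.transpose_transpose] at this
  have h3 : ‖Yᵀ * Y * (Yᵀ * Y)‖ ≤ ‖Y‖ * ‖Y * Yᵀ * Y‖ := by
    have := Matrix.l2_opNorm_mul Yᵀ (Y * Yᵀ * Y)
    rw [ht] at this
    simpa only [Matrix.mul_assoc] using this
  have h4 : ‖Y‖ ^ 3 ≤ ‖Y * Yᵀ * Y‖ := by
    rcases (norm_nonneg Y).eq_or_lt with h | h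
    · rw [← h]; simp
    · refine le_of_mul_le_mul_left ?_ h
      rw [h2, h1] at h3
      linarith
  have h5 : ‖Ystar * Ystarᵀ * Y‖ ≤ ‖Y‖ * ‖Ystar‖ ^ 2 := by
    have a := Matrix.l2_opNorm_mul (Ystar * Ystarᵀ) Y
    have b := Matrix.l2_opNorm_mul Ystar Ystarᵀ
    rw [ht] at b
    have := mul_le_mul_of_nonneg_right b (norm_nonneg Y)
    linarith
  rw [Matrix.sub_mul]
  have := norm_sub_norm_le (Y * Yᵀ * Y) (Ystar * Ystarᵀ * Y)
  linarith

end

lemma main_iii {p r : ℕ} (X : Matrix (Fin p) (Fin p) ℝ) (Y : Matrix (Fin p) (Fin r) ℝ) :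
    2 * (frob (Y * Yᵀ)) ^ 2 - 2 * frob (Y * Yᵀ) * frob X ≤
      trInner ((2 : ℝ) • ((Y * Yᵀ - X) * Y)) Y := by
  have h : trInner ((2 : ℝ) • ((Y * Yᵀ - X) * Y)) Y =
      2 * (trInner (Y * Yᵀ) (Y * Yᵀ) - trInner X (Y * Yᵀ)) := by
    rw [← Matrix.smul_mul, trInner_mul]
    unfold trInner
    rw [← Finset.sum_sub_distrib, Finset.mul_sum]
    refine Finset.sum_congr rfl fun i _ => ?_
    rw [← Finset.sum_sub_distrib, Finset.mul_sum]
    refine Finset.sum_congr rfl fun j _ => ?_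
    rw [Matrix.smul_apply, Matrix.sub_apply, smul_eq_mul]
    ring
  rw [h, frob_sq]
  have := trInner_le X (Y * Yᵀ)
  linarith

/-- regions with large Riemannian gradient of `H`: lower bounds for the
lifted gradient of `H` when the spectral norm of `Y` is large, and for its inner product
with `Y` when the Frobenius norm of `Y Yᵀ` is large. -/
theorem stmt10 {p r : ℕ} (Ystar Y : Matrix (Fin p) (Fin r) ℝ)
    (hYs : Ystar.rank = r) (hY : Y.rank = r)
    (X : Matrix (Fin p) (Fin p) ℝ) (hX : X = Ystar * Ystarᵀ) :
    (frob ((2 : ℝ) • ((Y * Yᵀ - X) * Y)) ≥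
      2 * ((sval Y 1) ^ 3 - sval Y 1 * (sval Ystar 1) ^ 2)) ∧
    (∀ β : ℝ, 1 < β → sval Y 1 > β * sval Ystar 1 →
      frob ((2 : ℝ) • ((Y * Yᵀ - X) * Y)) > 2 * (β ^ 3 - β) * (sval Ystar 1) ^ 3) ∧
    (trInner ((2 : ℝ) • ((Y * Yᵀ - X) * Y)) Y ≥
      2 * (frob (Y * Yᵀ)) ^ 2 - 2 * frob (Y * Yᵀ) * frob X) ∧
    (∀ γ : ℝ, 1 < γ → frob (Y * Yᵀ) > γ * frob X →
      trInner ((2 : ℝ) • ((Y * Yᵀ - X) * Y)) Y > 2 * (1 - 1 / γ) * (frob (Y * Yᵀ)) ^ 2) := by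
  subst hX
  have h2 := main_ii Ystar Y
  have h3 := main_iii (Ystar * Ystarᵀ) Y
  rw [frob_two]
  refine ⟨by linarith, fun β hβ hs => ?_, h3, fun γ hγ hs => ?_⟩
  · have ht : 0 ≤ sval Ystar 1 := Real.sqrt_nonneg _
    generalize sval Y 1 = s at *
    generalize sval Ystar 1 = t at *
    have hb : 0 ≤ β * t := by positivity
    have hs0 : 0 < s := by linarith
    have hbt : t ≤ β * t := by nlinarith
    have hpos : 0 < s ^ 2 + s * (β * t) + (β * t) ^ 2 - t ^ 2 := by
      have : t ^ 2 ≤ (β * t) ^ 2 := by gcongr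
      nlinarith [sq_nonneg s, mul_nonneg hs0.le hb, pow_pos hs0 2]
    have := mul_pos (sub_pos.2 hs) hpos
    nlinarith
  · have hb := frob_nonneg (Ystar * Ystarᵀ)
    have hg : 0 < γ := by linarith
    refine lt_of_lt_of_le ?_ h3
    generalize frob (Y * Yᵀ) = a at *
    generalize frob (Ystar * Ystarᵀ) = b at *
    have ha : 0 < a := lt_of_le_of_lt (by positivity) hs
    have h : b < a / γ := by rw [lt_div_iff₀ hg]; linarith
    have := mul_lt_mul_of_pos_left h ha
    have e : 2 * (1 - 1 / γ) * a ^ 2 = 2 * a ^ 2 - 2 * (a * (a / γ)) := by ring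
    rw [e]
    linarith
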